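/- Let γ ∈ (0,1]. There is a constant C depending only on γ with the following property. Let h > 0, T = [0,h]³, and let T = T⁻ ∪ T⁺ be a partition of T into two disjoint Lebesgue-measurable sets. Fix F ∈ ℝ³, a unit vector n̄, and 0 < β⁻ ≤ β⁺, and suppose there exists a tetrahedron P with P ⊆ T⁺, vol(P) ≥ γh³, and F ∈ closure(P). Let f be a closed face of the cube T with unit normal n_f, and let f = f⁻ ∪ f⁺ be any partition of f into two H²-measurable sets. Then for every p ∈ Q₁, writing q = C_T(p), one has ( ∫_{f⁻} (β⁻ ∇p·n_f)² dH² + ∫_{f⁺} (β⁺ ∇q·n_f)² dH² )^{1/2} ≤ C h^{−1/2} (β⁺/√β⁻) ( β⁻ ‖∇p‖²_{L²(T⁻)} + β⁺ ‖∇q‖²_{L²(T⁺)} )^{1/2}. (This is the weighted trace inequality (4.6b) of Theorem 4.5, in the unified form of Remark 4.6, ‖β∇φ_T·n‖_{L²(f)} ≤ C h^{−1/2} (β⁺/√β⁻) ‖√β ∇φ_T‖_{L²(T)}, in the case where the subelement carrying the larger coefficient β⁺ contains a tetrahedron of uniformly comparable volume whose closure contains F.) -/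

import Mathlib

/-!
Put `q = C_T(p)`, again an element of `Q₁`, and `M = (48 R)^{1/2}`, where `R` is the squared norm
of the coefficients of `∇q` rescaled to the unit cube, so that `|∇q| ≤ M` on `T`.

* Pointwise bounds of the fluxes. Since `∇q(F)·n̄ = (β⁻/β⁺) ∇p(F)·n̄`, one has
  `β⁻∇p = β⁻∇q + (β⁺ - β⁻)(∇q(F)·n̄) n̄`. As `F ∈ closure P ⊆ T`, this gives `β⁻|∇p| ≤ β⁺M` on `T`,
  while `β⁺|∇q| ≤ β⁺M` is clear. A face has finite `H²` measure, at most `3h²`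
  (`face_measure_le`), so the left-hand side is at most a constant times `h β⁺M`.
* Inverse estimate (`inverse_estimate`). For every measurable `S ⊆ T` of volume at least `γh³`,
  `h³M² ≤ C(γ) ∫_S |∇q|²`. By scaling and compactness of the unit sphere of coefficients, this
  follows from the fact that a nonzero gradient of a trilinear polynomial vanishes only on a null
  set (`volume_grad_zero`): off a set of volume `γ/2`, uniformly in the coefficients, the gradient
  is bounded below (`uniform_small_set`). It is applied with `S = T⁺`, so of the tetrahedron only
  its volume and the position of `F` matter.

Together the two bounds give the trace inequality with the factor `(β⁺)^{1/2}`, which is at most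
`β⁺ / (β⁻)^{1/2}`.
-/


open MeasureTheory
open scoped RealInnerProductSpace ENNReal

noncomputable section

abbrev V3 : Type := EuclideanSpace ℝ (Fin 3)

/-- `Q₁`: the space of trilinear polynomials on `ℝ³`. -/
def IsQ1 (p : V3 → ℝ) : Prop :=
  ∃ a₀ a₁ a₂ a₃ a₄ a₅ a₆ a₇ : ℝ, ∀ x : V3,
    p x = a₀ + a₁ * x 0 + a₂ * x 1 + a₃ * x 2
      + a₄ * (x 0 * x 1) + a₅ * (x 0 * x 2) + a₆ * (x 1 * x 2)
      + a₇ * (x 0 * x 1 * x 2)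

/-- The cube `T = [0,h]³`. -/
def cube (h : ℝ) : Set V3 := {X | ∀ i, X i ∈ Set.Icc (0:ℝ) h}

/-- `P` is a tetrahedron: the convex hull of four affinely independent points. -/
def IsTetra (P : Set V3) : Prop :=
  ∃ v : Fin 4 → V3, AffineIndependent ℝ v ∧ P = convexHull ℝ (Set.range v)

/-- The extension operator `C_T(p) = p + (β⁻/β⁺ − 1)(∇p(F)·n̄) L`, `L(X) = (X−F)·n̄`. -/
def CT (βm βp : ℝ) (F nbar : V3) (p : V3 → ℝ) : V3 → ℝ :=
  fun X => p X + (βm / βp - 1) * (fderiv ℝ p F nbar) * ⟪X - F, nbar⟫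

/-- `f` is a closed face of the cube `[0,h]³` with unit normal `nf`. -/
def IsFace (h : ℝ) (f : Set V3) (nf : V3) : Prop :=
  ∃ i : Fin 3, (nf = EuclideanSpace.single i 1 ∨ nf = -EuclideanSpace.single i 1) ∧
    (f = {X ∈ cube h | X i = 0} ∨ f = {X ∈ cube h | X i = h})

/-! ### Gradients of trilinear polynomials -/

/-- The gradient at `X` of the trilinear polynomial whose coefficients of
`x, y, z, xy, xz, yz, xyz` are `a 0, …, a 6`. -/
def grad (a : Fin 7 → ℝ) (X : V3) : V3 :=
  !₂[a 0 + a 3 * X 1 + a 4 * X 2 + a 6 * (X 1 * X 2),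
     a 1 + a 3 * X 0 + a 5 * X 2 + a 6 * (X 0 * X 2),
     a 2 + a 4 * X 0 + a 5 * X 1 + a 6 * (X 0 * X 1)]

lemma hasFDerivAt_of_eq {p : V3 → ℝ} {a₀ : ℝ} {a : Fin 7 → ℝ}
    (hp : ∀ x : V3, p x = a₀ + a 0 * x 0 + a 1 * x 1 + a 2 * x 2
      + a 3 * (x 0 * x 1) + a 4 * (x 0 * x 2) + a 5 * (x 1 * x 2)
      + a 6 * (x 0 * x 1 * x 2)) (X : V3) :
    HasFDerivAt p (innerSL ℝ (grad a X)) X := by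
  obtain rfl : p = _ := funext hp
  have hc (i : Fin 3) : HasFDerivAt (fun x : V3 => x i) (EuclideanSpace.proj i : V3 →L[ℝ] ℝ) X :=
    (EuclideanSpace.proj i : V3 →L[ℝ] ℝ).hasFDerivAt
  have h := (((((((hc 0).const_mul (a 0)).const_add a₀).add ((hc 1).const_mul (a 1))).add
    ((hc 2).const_mul (a 2))).add (((hc 0).mul (hc 1)).const_mul (a 3))).add
    (((hc 0).mul (hc 2)).const_mul (a 4))).add (((hc 1).mul (hc 2)).const_mul (a 5)) |>.add
    ((((hc 0).mul (hc 1)).mul (hc 2)).const_mul (a 6))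
  refine h.congr_fderiv ?_
  ext v
  simp [grad, PiLp.inner_apply, Fin.sum_univ_three]
  ring

lemma continuous_grad : Continuous fun z : (Fin 7 → ℝ) × V3 => grad z.1 z.2 := by
  unfold grad
  refine (PiLp.continuous_toLp 2 _).comp (continuous_pi fun i => ?_)
  fin_cases i <;> simp <;> fun_prop

lemma norm_grad_sq (a : Fin 7 → ℝ) (X : V3) : ‖grad a X‖ ^ 2 =
    (a 0 + a 3 * X 1 + a 4 * X 2 + a 6 * (X 1 * X 2)) ^ 2 +
    (a 1 + a 3 * X 0 + a 5 * X 2 + a 6 * (X 0 * X 2)) ^ 2 +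
    (a 2 + a 4 * X 0 + a 5 * X 1 + a 6 * (X 0 * X 1)) ^ 2 := by
  simp [grad, EuclideanSpace.norm_sq_eq, Fin.sum_univ_three]

lemma grad_smul (r : ℝ) (a : Fin 7 → ℝ) (X : V3) : grad (r • a) X = r • grad a X := by
  ext i
  fin_cases i <;> simp [grad] <;> ring

/-- The coefficients whose gradient field is `X ↦ grad a (h • X)`. The factors are `h` and `h ^ 2`
rather than `h ^ 2` and `h ^ 3` because the gradient, not the polynomial, is substituted into. -/
def rescale (h : ℝ) (a : Fin 7 → ℝ) : Fin 7 → ℝ :=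
  ![a 0, a 1, a 2, h * a 3, h * a 4, h * a 5, h ^ 2 * a 6]

lemma grad_rescale (h : ℝ) (a : Fin 7 → ℝ) (X : V3) :
    grad (rescale h a) X = grad a (h • X) := by
  ext i
  fin_cases i <;> simp [grad, rescale] <;> ring

open scoped Pointwise in
lemma cube_eq_smul {h : ℝ} (hh : 0 < h) : cube h = h • cube 1 := by
  ext X
  rw [Set.mem_smul_set_iff_inv_smul_mem₀ hh.ne']
  simp only [cube, Set.mem_ofPred_eq, Set.mem_Icc, PiLp.smul_apply, smul_eq_mul]
  refine forall_congr' fun i => ?_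
  rw [inv_mul_le_iff₀ hh, mul_one]
  refine and_congr_left' ⟨fun H => by positivity, fun H => ?_⟩
  exact (mul_nonneg_iff_of_pos_left (inv_pos.2 hh)).1 H

lemma isCompact_cube (h : ℝ) : IsCompact (cube h) := by
  have := (isCompact_univ_pi fun _ : Fin 3 => isCompact_Icc (a := (0:ℝ)) (b := h)).image
    (PiLp.continuous_toLp 2 (fun _ : Fin 3 => ℝ))
  convert this using 1
  ext X
  simp only [cube, Set.mem_ofPred_eq, Set.mem_image, Set.mem_univ_pi]
  exact ⟨fun H => ⟨fun i => X i, H, rfl⟩, by rintro ⟨y, hy, rfl⟩; exact hy⟩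

lemma norm_grad_sq_le (a : Fin 7 → ℝ) {X : V3} (hX : X ∈ cube 1) :
    ‖grad a X‖ ^ 2 ≤ 48 * ‖a‖ ^ 2 := by
  have hb : ∀ i, |a i| ≤ ‖a‖ := fun i => by simpa using norm_le_pi_norm a i
  have hx : ∀ i, |X i| ≤ 1 := fun i => abs_le.2 ⟨by linarith [(hX i).1], (hX i).2⟩
  have key : ∀ (i j k l : Fin 7) (m n : Fin 3),
      (a i + a j * X m + a k * X n + a l * (X m * X n)) ^ 2 ≤ (4 * ‖a‖) ^ 2 := by
    intro i j k l m n
    have e1 : |a j * X m| ≤ ‖a‖ * 1 := by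
      rw [abs_mul]; exact mul_le_mul (hb _) (hx _) (abs_nonneg _) (norm_nonneg _)
    have e2 : |a k * X n| ≤ ‖a‖ * 1 := by
      rw [abs_mul]; exact mul_le_mul (hb _) (hx _) (abs_nonneg _) (norm_nonneg _)
    have e3 : |a l * (X m * X n)| ≤ ‖a‖ * (1 * 1) := by
      rw [abs_mul, abs_mul]
      exact mul_le_mul (hb _) (mul_le_mul (hx _) (hx _) (abs_nonneg _) zero_le_one)
        (by positivity) (norm_nonneg _)
    have e0 := hb i
    rw [abs_le] at e0 e1 e2 e3
    exact sq_le_sq' (by linarith [e0.1, e1.1, e2.1, e3.1]) (by linarith [e0.2, e1.2, e2.2, e3.2])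
  rw [norm_grad_sq]
  linarith [key 0 3 4 6 1 2, key 1 3 5 6 0 2, key 2 4 5 6 0 1]

/-! ### Zero sets -/

/-- Fubini along lines: a continuous function whose restriction to every line of direction `v`
is a nonzero polynomial vanishes only on a null set. -/
lemma volume_zero_of_lines {U : V3 → ℝ} (hU : Continuous U) (v : V3)
    (H : ∀ y, ∃ P : Polynomial ℝ, P ≠ 0 ∧ ∀ t : ℝ, U (y + t • v) = P.eval t) :
    volume {X | U X = 0} = 0 := by
  have hs : MeasurableSet {X | U X ≠ 0} := (isOpen_ne_fun hU continuous_const).measurableSet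
  have := ae_mem_of_ae_add_linearMap_mem (LinearMap.toSpanSingleton ℝ V3 v) volume volume hs
    (fun y => by
      obtain ⟨P, hP, hPe⟩ := H y
      have : {t : ℝ | ¬ (y + LinearMap.toSpanSingleton ℝ V3 v t ∈ {X | U X ≠ 0})}
          ⊆ {t | P.IsRoot t} := by
        intro t ht
        simpa [hPe] using ht
      exact measure_mono_null this ((Polynomial.finite_setOfPred_isRoot hP).measure_zero _))
  simpa [ae_iff] using this

lemma volume_bilin_zero {j k : Fin 3} (hjk : j ≠ k) (α β γ δ : ℝ)
    (h : ¬ (α = 0 ∧ β = 0 ∧ γ = 0 ∧ δ = 0)) :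
    volume {X : V3 | α + β * X j + γ * X k + δ * (X j * X k) = 0} = 0 := by
  have hU : Continuous fun X : V3 => α + β * X j + γ * X k + δ * (X j * X k) := by fun_prop
  have quad (a b c : ℝ) (h : c ≠ 0 ∨ b ≠ 0) :
      (Polynomial.C a + Polynomial.C b * Polynomial.X + Polynomial.C c * Polynomial.X ^ 2) ≠ 0 := by
    intro h0
    rcases h with h | h
    · have := congrArg (fun P => Polynomial.coeff P 2) h0
      exact h (by simpa [Polynomial.coeff_X, Polynomial.coeff_C] using this)
    · have := congrArg (fun P => Polynomial.coeff P 1) h0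
      exact h (by simpa [Polynomial.coeff_X, Polynomial.coeff_C] using this)
  -- The direction is chosen so that the leading coefficient along the line does not depend on
  -- the line: `e_j + e_k` if the quadratic term is present, otherwise `e_j` or `e_k`.
  by_cases hδ : δ = 0
  · subst hδ
    by_cases hβ : β = 0
    · by_cases hγ : γ = 0
      · have : α ≠ 0 := by tauto
        simp [hβ, hγ, this]
      · refine volume_zero_of_lines hU (EuclideanSpace.single k 1) fun y =>
          ⟨_, quad (α + γ * y k) γ 0 (Or.inr hγ), fun t => ?_⟩
        simp [hβ]
        ring
    · refine volume_zero_of_lines hU (EuclideanSpace.single j 1) fun y =>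
        ⟨_, quad (α + β * y j + γ * y k) β 0 (Or.inr hβ), fun t => ?_⟩
      simp [hjk.symm]
      ring
  · refine volume_zero_of_lines hU (EuclideanSpace.single j 1 + EuclideanSpace.single k 1) fun y =>
      ⟨_, quad (α + β * y j + γ * y k + δ * (y j * y k))
        (β + γ + δ * (y j + y k)) δ (Or.inl hδ), fun t => ?_⟩
    simp [hjk, hjk.symm]
    ring

lemma volume_grad_zero {a : Fin 7 → ℝ} (ha : a ≠ 0) : volume {X | grad a X = 0} = 0 := by
  have h0 : ∀ X, grad a X = 0 → a 0 + a 3 * X 1 + a 4 * X 2 + a 6 * (X 1 * X 2) = 0 :=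
    fun X h => by simpa [grad] using congrArg (fun v : V3 => v 0) h
  have h1 : ∀ X, grad a X = 0 → a 1 + a 3 * X 0 + a 5 * X 2 + a 6 * (X 0 * X 2) = 0 :=
    fun X h => by simpa [grad] using congrArg (fun v : V3 => v 1) h
  have h2 : ∀ X, grad a X = 0 → a 2 + a 4 * X 0 + a 5 * X 1 + a 6 * (X 0 * X 1) = 0 :=
    fun X h => by simpa [grad] using congrArg (fun v : V3 => v 2) h
  by_cases c0 : a 0 = 0 ∧ a 3 = 0 ∧ a 4 = 0 ∧ a 6 = 0
  · by_cases c1 : a 1 = 0 ∧ a 3 = 0 ∧ a 5 = 0 ∧ a 6 = 0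
    · by_cases c2 : a 2 = 0 ∧ a 4 = 0 ∧ a 5 = 0 ∧ a 6 = 0
      · refine absurd (funext fun i => ?_) ha
        fin_cases i <;> simp [c0, c1, c2]
      · exact measure_mono_null h2 (volume_bilin_zero (by decide) _ _ _ _ c2)
    · exact measure_mono_null h1 (volume_bilin_zero (by decide) _ _ _ _ c1)
  · exact measure_mono_null h0 (volume_bilin_zero (by decide) _ _ _ _ c0)

/-! ### The inverse estimate -/

/-- On the unit cube, gradient fields with coefficients near a given nonzero vector are bounded
below by a common constant off sets of measure at most `δ`. -/
lemma local_small_set {δ : ℝ≥0∞} (hδ : 0 < δ) {b₀ : Fin 7 → ℝ} (hb₀ : b₀ ≠ 0) :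
    ∃ ε : ℝ, 0 < ε ∧ ∀ᶠ b in nhds b₀, volume {X ∈ cube 1 | ‖grad b X‖ ^ 2 < ε} ≤ δ := by
  have hcont (b : Fin 7 → ℝ) : Continuous (grad b) :=
    continuous_grad.comp (Continuous.prodMk_right b)
  have hlt : volume (cube 1) ≠ ⊤ := (isCompact_cube 1).measure_lt_top.ne
  -- The sublevel sets of `‖grad b₀ X‖ ^ 2` decrease to its zero set, which is null.
  let s : ℕ → Set V3 := fun n => {X ∈ cube 1 | ‖grad b₀ X‖ ^ 2 ≤ 1 / ((n : ℝ) + 1)}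
  have hs : ∀ n, NullMeasurableSet (s n) volume := fun n =>
    ((isCompact_cube 1).isClosed.inter
      (isClosed_le ((hcont b₀).norm.pow 2) continuous_const)).measurableSet.nullMeasurableSet
  have hm : Antitone s := fun m n hmn X hX =>
    ⟨hX.1, hX.2.trans (Nat.one_div_le_one_div hmn)⟩
  have hlim := tendsto_measure_iInter_atTop hs hm
    ⟨0, ((measure_mono fun X hX => hX.1).trans_lt hlt.lt_top).ne⟩
  have hnull : volume (⋂ n, s n) = 0 := by
    refine measure_mono_null (fun X hX => ?_) (volume_grad_zero hb₀)
    have hle : ‖grad b₀ X‖ ^ 2 ≤ 0 :=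
      ge_of_tendsto' tendsto_one_div_add_atTop_nhds_zero_nat fun n => (Set.mem_iInter.1 hX n).2
    simpa using hle.antisymm (by positivity)
  rw [hnull] at hlim
  obtain ⟨n, hn⟩ := (hlim.eventually_lt_const hδ).exists
  set ε : ℝ := 1 / ((n : ℝ) + 1) with hε
  have hεpos : 0 < ε := by positivity
  refine ⟨ε / 2, by positivity, ?_⟩
  have hunif : ∀ᶠ b in nhds b₀, ∀ X ∈ cube 1, ‖grad b₀ X‖ ^ 2 < ‖grad b X‖ ^ 2 + ε / 2 := by
    refine (isCompact_cube 1).eventually_forall_of_forall_eventually fun X _ => ?_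
    have c1 : Continuous fun z : (Fin 7 → ℝ) × V3 => ‖grad b₀ z.2‖ ^ 2 :=
      ((hcont b₀).comp continuous_snd).norm.pow 2
    have c2 : Continuous fun z : (Fin 7 → ℝ) × V3 => ‖grad z.1 z.2‖ ^ 2 + ε / 2 :=
      (continuous_grad.norm.pow 2).add continuous_const
    exact (isOpen_lt c1 c2).mem_nhds (by simp [hεpos])
  filter_upwards [hunif] with b hb
  refine (measure_mono fun X hX => ?_).trans hn.le
  exact ⟨hX.1, by linarith [hb X hX.1, hX.2]⟩

/-- Remez-type estimate on the unit cube: the set where a gradient field is small relative to its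
coefficients has small measure, uniformly in the coefficients. This follows from
`local_small_set` by compactness of the unit sphere and homogeneity. -/
lemma uniform_small_set {δ : ℝ≥0∞} (hδ : 0 < δ) :
    ∃ ε : ℝ, 0 < ε ∧ ∀ b : Fin 7 → ℝ,
      volume {X ∈ cube 1 | ‖grad b X‖ ^ 2 < ε * ‖b‖ ^ 2} ≤ δ := by
  obtain ⟨ε, hε, H⟩ : ∃ ε : ℝ, 0 < ε ∧ ∀ b ∈ Metric.sphere (0 : Fin 7 → ℝ) 1,
      volume {X ∈ cube 1 | ‖grad b X‖ ^ 2 < ε} ≤ δ := by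
    refine (isCompact_sphere (0 : Fin 7 → ℝ) 1).induction_on
      (p := fun K => ∃ ε : ℝ, 0 < ε ∧ ∀ b ∈ K,
        volume {X ∈ cube 1 | ‖grad b X‖ ^ 2 < ε} ≤ δ) ⟨1, one_pos, by simp⟩ ?_ ?_ ?_
    · rintro s t hst ⟨ε, hε, h⟩
      exact ⟨ε, hε, fun b hb => h b (hst hb)⟩
    · rintro s t ⟨ε, hε, h⟩ ⟨ε', hε', h'⟩
      refine ⟨min ε ε', lt_min hε hε', fun b hb => ?_⟩
      rcases hb with hb | hb
      · exact (h b hb).trans' (measure_mono fun X hX => ⟨hX.1, hX.2.trans_le (min_le_left _ _)⟩)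
      · exact (h' b hb).trans' (measure_mono fun X hX => ⟨hX.1, hX.2.trans_le (min_le_right _ _)⟩)
    · intro b hb
      obtain ⟨ε, hε, h⟩ := local_small_set hδ (b₀ := b) (by rintro rfl; simp at hb)
      exact ⟨_, mem_nhdsWithin_of_mem_nhds h, ε, hε, fun b hb => hb⟩
  refine ⟨ε, hε, fun b => ?_⟩
  rcases eq_or_ne b 0 with rfl | hb
  · simp only [norm_zero]
    refine (measure_mono_null (t := ∅) ?_ measure_empty).le.trans zero_le
    rintro X ⟨-, hX⟩
    have := sq_nonneg ‖grad 0 X‖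
    linarith
  · have hb' : 0 < ‖b‖ := norm_pos_iff.2 hb
    refine (H (‖b‖⁻¹ • b) (by simp [norm_smul, hb])).trans' (measure_mono fun X hX => ⟨hX.1, ?_⟩)
    have := hX.2
    rw [grad_smul, norm_smul, mul_pow, norm_inv, norm_norm, inv_pow,
      inv_mul_lt_iff₀ (by positivity)]
    linarith

open scoped Pointwise in
/-- The inverse estimate: the `L²` norm of a gradient over a subset of the cube of comparable
volume controls its coefficients. -/
lemma inverse_estimate {γ : ℝ} (hγ : 0 < γ) :
    ∃ ε : ℝ, 0 < ε ∧ ∀ (h : ℝ), 0 < h → ∀ (S : Set V3), MeasurableSet S → S ⊆ cube h →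
      ENNReal.ofReal (γ * h ^ 3) ≤ volume S → ∀ a : Fin 7 → ℝ,
      ε * ‖rescale h a‖ ^ 2 * h ^ 3 ≤ ∫ X in S, ‖grad a X‖ ^ 2 := by
  obtain ⟨ε, hε, H⟩ := uniform_small_set (δ := ENNReal.ofReal (γ / 2)) (by simpa using hγ)
  refine ⟨ε * (γ / 2), by positivity, fun h hh S hS hSc hvol a => ?_⟩
  have hcont : Continuous (grad a) := continuous_grad.comp (Continuous.prodMk_right a)
  set m : ℝ := ε * ‖rescale h a‖ ^ 2 with hm
  have hm0 : 0 ≤ m := by positivity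
  -- The exceptional set, which takes up at most half of the volume of `S`.
  set N : Set V3 := {X ∈ cube h | ‖grad a X‖ ^ 2 < m} with hN
  have hNmeas : MeasurableSet N := (isCompact_cube h).measurableSet.inter
    (isOpen_lt (hcont.norm.pow 2) continuous_const).measurableSet
  have hNvol : volume N ≤ ENNReal.ofReal (γ / 2 * h ^ 3) := by
    have hNs : N ⊆ h • {X ∈ cube 1 | ‖grad (rescale h a) X‖ ^ 2 < m} := by
      rintro X ⟨hX, hXm⟩
      rw [cube_eq_smul hh] at hX
      obtain ⟨Y, hY, rfl⟩ := hX
      exact ⟨Y, ⟨hY, by rw [grad_rescale]; exact hXm⟩, rfl⟩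
    refine (measure_mono hNs).trans ?_
    rw [Measure.addHaar_smul, finrank_euclideanSpace_fin, abs_of_pos (by positivity),
      mul_comm (γ / 2), ENNReal.ofReal_mul (by positivity)]
    gcongr
    exact H _
  have hSfin : volume S ≠ ⊤ :=
    ((measure_mono hSc).trans_lt (isCompact_cube h).measure_lt_top).ne
  have hint : IntegrableOn (fun X => ‖grad a X‖ ^ 2) S :=
    ((hcont.norm.pow 2).continuousOn.integrableOn_compact (isCompact_cube h)).mono_set hSc
  have hreal : γ / 2 * h ^ 3 ≤ volume.real (S \ N) := by
    have h1 : γ * h ^ 3 ≤ volume.real S :=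
      (ENNReal.ofReal_le_iff_le_toReal hSfin).1 hvol
    have h2 : volume.real N ≤ γ / 2 * h ^ 3 :=
      ENNReal.toReal_le_of_le_ofReal (by positivity) hNvol
    have h3 := le_measureReal_sdiff (μ := volume) (s₁ := S) (s₂ := N)
      (h := (hNvol.trans_lt ENNReal.ofReal_lt_top).ne)
    linarith
  calc ε * (γ / 2) * ‖rescale h a‖ ^ 2 * h ^ 3 = m * (γ / 2 * h ^ 3) := by rw [hm]; ring
    _ ≤ m * volume.real (S \ N) := by gcongr
    _ ≤ ∫ X in S \ N, ‖grad a X‖ ^ 2 := by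
      have := setIntegral_mono_on (μ := volume) (s := S \ N) (f := fun _ => m)
        (g := fun X => ‖grad a X‖ ^ 2)
        (integrableOn_const (measure_ne_top_of_subset Set.sdiff_subset hSfin))
        (hint.mono_set Set.sdiff_subset) (hS.diff hNmeas)
        (fun X hX => not_lt.1 fun hlt => hX.2 ⟨hSc hX.1, hlt⟩)
      simpa [mul_comm] using this
    _ ≤ ∫ X in S, ‖grad a X‖ ^ 2 :=
      setIntegral_mono_set hint (Filter.Eventually.of_forall fun X => by positivity)
        (Filter.Eventually.of_forall Set.sdiff_subset)

/-! ### The measure of a face -/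

/-- A face is the image of the square `[0,h]²` under a map that is `√3`-Lipschitz from the sup norm
to the Euclidean norm, and for the sup norm `μH[2]` is Lebesgue measure. The constant is not sharp
(the value is `h²`). -/
lemma face_measure_le {h : ℝ} (hh : 0 < h) {f : Set V3} {nf : V3} (hf : IsFace h f nf) :
    μH[2] f ≤ ENNReal.ofReal (3 * h ^ 2) := by
  obtain ⟨i, -, hf⟩ := hf
  obtain ⟨c, hc⟩ : ∃ c : ℝ, f = {X ∈ cube h | X i = c} := by
    rcases hf with hf | hf <;> exact ⟨_, hf⟩
  let K : Set (Fin 2 → ℝ) := Set.univ.pi fun _ => Set.Icc (0 : ℝ) h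
  let g : (Fin 2 → ℝ) → V3 := fun y => WithLp.toLp 2 (i.insertNth c y)
  have hg : LipschitzWith (NNReal.sqrt 3) g := by
    have h1 : LipschitzWith 1 (fun y : Fin 2 → ℝ => (i.insertNth c y : Fin 3 → ℝ)) := by
      refine LipschitzWith.of_dist_le_mul fun x y => ?_
      rw [NNReal.coe_one, one_mul, dist_pi_le_iff dist_nonneg, Fin.forall_iff_succAbove i]
      simpa using fun j => dist_le_pi_dist x y j
    have h2 := PiLp.lipschitzWith_toLp 2 (fun _ : Fin 3 => ℝ)
    have h3 := h2.comp h1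
    have e : ((Fintype.card (Fin 3) : NNReal) ^ (1 / (2 : ℝ≥0∞)).toReal * 1) = NNReal.sqrt 3 := by
      rw [NNReal.sqrt_eq_rpow]; norm_num
    rw [e] at h3
    exact h3
  have hfK : f ⊆ g '' K := by
    rintro X hX
    rw [hc] at hX
    refine ⟨fun j => X (i.succAbove j), fun j _ => hX.1 _, ?_⟩
    ext k
    rcases Fin.eq_self_or_eq_succAbove i k with rfl | ⟨j, rfl⟩
    · simpa [g] using hX.2.symm
    · simp [g]
  have hvol : μH[2] K = ENNReal.ofReal (h ^ 2) := by
    have : (μH[2] : Measure (Fin 2 → ℝ)) = volume := by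
      simpa using hausdorffMeasure_pi_real (ι := Fin 2)
    rw [this, volume_pi_pi]
    simp [ENNReal.ofReal_pow hh.le]
  refine (measure_mono hfK).trans ((hg.hausdorffMeasure_image_le (by norm_num) K).trans ?_)
  rw [hvol, ENNReal.ofReal_mul (by norm_num)]
  gcongr
  rw [show (2:ℝ) = ((2:ℕ):ℝ) by norm_num, ENNReal.rpow_natCast, ← ENNReal.coe_pow, NNReal.sq_sqrt]
  simp

/-! ### The trace inequality -/

/-- Weighted trace inequality (4.6b) of Theorem 4.5, in the unified form of Remark 4.6:
`‖β∇φ_T·n‖_{L²(f)} ≤ C h^{−1/2} (β⁺/√β⁻) ‖√β ∇φ_T‖_{L²(T)}`, in the case where the subelement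
`T⁺` carrying the larger coefficient `β⁺` contains a tetrahedron of uniformly comparable volume
whose closure contains `F`. -/
theorem trace_inequality_weighted (γ : ℝ) (hγ0 : 0 < γ) (hγ1 : γ ≤ 1) :
    ∃ C : ℝ, 0 < C ∧
      ∀ (h : ℝ), 0 < h →
      ∀ (Tm Tp : Set V3), MeasurableSet Tm → MeasurableSet Tp →
        Disjoint Tm Tp → Tm ∪ Tp = cube h →
      ∀ (F nbar : V3), ‖nbar‖ = 1 →
      ∀ (βm βp : ℝ), 0 < βm → βm ≤ βp →
      (∃ P : Set V3, IsTetra P ∧ P ⊆ Tp ∧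
          ENNReal.ofReal (γ * h ^ 3) ≤ volume P ∧ F ∈ closure P) →
      ∀ (f : Set V3) (nf : V3), IsFace h f nf →
      ∀ (fm fp : Set V3), MeasurableSet fm → MeasurableSet fp →
        Disjoint fm fp → fm ∪ fp = f →
      ∀ p : V3 → ℝ, IsQ1 p →
        Real.sqrt ((∫ X in fm, (βm * fderiv ℝ p X nf) ^ 2 ∂μH[2]) +
            ∫ X in fp, (βp * fderiv ℝ (CT βm βp F nbar p) X nf) ^ 2 ∂μH[2]) ≤
          C * (Real.sqrt h)⁻¹ * (βp / Real.sqrt βm) *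
            Real.sqrt (βm * (∫ X in Tm, ‖fderiv ℝ p X‖ ^ 2) +
              βp * ∫ X in Tp, ‖fderiv ℝ (CT βm βp F nbar p) X‖ ^ 2) := by
  obtain ⟨ε, hε, H⟩ := inverse_estimate hγ0
  -- `288 = 2 · 3 · 48`: two pieces of the face, `face_measure_le`, `norm_grad_sq_le`.
  refine ⟨Real.sqrt (288 / ε), by positivity, ?_⟩
  rintro h hh Tm Tp hTm hTp - hT F nbar hn βm βp hβm hβ ⟨P, -, hPT, hPvol, hFP⟩ f nf hf
    fm fp - - - hfmp p ⟨a₀, a₁, a₂, a₃, a₄, a₅, a₆, a₇, hp⟩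
  have hβp : 0 < βp := hβm.trans_le hβ
  have hTpc : Tp ⊆ cube h := hT ▸ Set.subset_union_right
  have hF : F ∈ cube h :=
    closure_minimal (hPT.trans hTpc) (isCompact_cube h).isClosed hFP
  set c : Fin 7 → ℝ := ![a₁, a₂, a₃, a₄, a₅, a₆, a₇] with hc
  have hDp (X : V3) : HasFDerivAt p (innerSL ℝ (grad c X)) X :=
    hasFDerivAt_of_eq (a₀ := a₀) (a := c) (by simpa [hc] using hp) X
  set κ : ℝ := (βm / βp - 1) * ⟪grad c F, nbar⟫ with hκ
  set q := CT βm βp F nbar p with hq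
  -- Adding a multiple of `L` only changes the coefficients of `1, x, y, z`.
  set d : Fin 7 → ℝ := ![a₁ + κ * nbar 0, a₂ + κ * nbar 1, a₃ + κ * nbar 2, a₄, a₅, a₆, a₇] with hd
  have hDq (X : V3) : HasFDerivAt q (innerSL ℝ (grad d X)) X := by
    refine hasFDerivAt_of_eq (a₀ := a₀ - κ * ⟪F, nbar⟫) (a := d) (fun x => ?_) X
    simp only [hq, CT, (hDp F).fderiv, innerSL_apply_apply]
    rw [← hκ, hp x, inner_sub_left, PiLp.inner_apply x]
    simp [hd, Fin.sum_univ_three]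
    ring
  have hdc (X : V3) : grad d X = grad c X + κ • nbar := by
    ext i
    fin_cases i <;> simp [grad, hc, hd] <;> ring
  clear_value c d
  simp only [(hDp _).fderiv, (hDq _).fderiv, innerSL_apply_norm, innerSL_apply_apply]
  set R : ℝ := ‖rescale h d‖ ^ 2 with hR
  set M : ℝ := Real.sqrt (48 * R) with hM
  have hM2 : M ^ 2 = 48 * R := Real.sq_sqrt (by positivity)
  have hM0 : 0 ≤ M := Real.sqrt_nonneg _
  have hdM {X : V3} (hX : X ∈ cube h) : ‖grad d X‖ ≤ M := by
    rw [cube_eq_smul hh] at hX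
    obtain ⟨Y, hY, rfl⟩ := hX
    refine Real.le_sqrt_of_sq_le ?_
    have := norm_grad_sq_le (rescale h d) hY
    rwa [grad_rescale] at this
  -- `∇q(F)·n̄ = (β⁻/β⁺) ∇p(F)·n̄` (this is `hts`), so `∇p` is recovered from `∇q` by `e`.
  have hcM {X : V3} (hX : X ∈ cube h) : βm * ‖grad c X‖ ≤ βp * M := by
    set t : ℝ := ⟪grad d F, nbar⟫ with ht
    have htM : |t| ≤ M := by
      have := abs_real_inner_le_norm (grad d F) nbar
      rw [hn, mul_one] at this
      exact this.trans (hdM hF)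
    have hts : t = βm / βp * ⟪grad c F, nbar⟫ := by
      rw [ht, hdc, inner_add_left, real_inner_smul_left, real_inner_self_eq_norm_sq, hn, hκ]
      ring
    have hβκ : βm * κ = (βm - βp) * t := by
      rw [hκ, hts]
      field_simp
    have e : βm • grad c X = βm • grad d X + ((βp - βm) * t) • nbar := by
      rw [hdc, smul_add, smul_smul, hβκ, add_assoc, ← add_smul]
      ring_nf
      simp
    calc βm * ‖grad c X‖ = ‖βm • grad c X‖ := by rw [norm_smul, Real.norm_of_nonneg hβm.le]
      _ ≤ ‖βm • grad d X‖ + ‖((βp - βm) * t) • nbar‖ := e ▸ norm_add_le _ _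
      _ = βm * ‖grad d X‖ + (βp - βm) * |t| := by
        rw [norm_smul, norm_smul, hn, mul_one, norm_mul, Real.norm_of_nonneg hβm.le,
          Real.norm_of_nonneg (sub_nonneg.2 hβ), Real.norm_eq_abs]
      _ ≤ βm * M + (βp - βm) * M := by
        gcongr
        exact hdM hX
      _ = βp * M := by ring
  have hnf : ‖nf‖ = 1 := by
    obtain ⟨i, hi | hi, -⟩ := hf <;> simp [hi]
  have hfc : f ⊆ cube h := by
    obtain ⟨i, -, hi | hi⟩ := hf <;> rw [hi] <;> exact fun X hX => hX.1
  have hface := face_measure_le hh hf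
  -- No measurability of `s` is needed: only an upper bound of the integral is claimed.
  have hbound (s : Set V3) (hs : s ⊆ f) (β : ℝ) (hβ0 : 0 < β) (g : V3 → V3)
      (hg : ∀ X ∈ cube h, β * ‖g X‖ ≤ βp * M) :
      ∫ X in s, (β * ⟪g X, nf⟫) ^ 2 ∂μH[2] ≤ (βp * M) ^ 2 * (3 * h ^ 2) := by
    have hsm : μH[2] s ≤ ENNReal.ofReal (3 * h ^ 2) := (measure_mono hs).trans hface
    have h1 := norm_setIntegral_le_of_norm_le_const (μ := μH[2]) (s := s)
      (f := fun X => (β * ⟪g X, nf⟫) ^ 2) (C := (βp * M) ^ 2)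
      (hsm.trans_lt ENNReal.ofReal_lt_top) (fun X hX => by
        have h2 := abs_real_inner_le_norm (g X) nf
        rw [hnf, mul_one] at h2
        rw [norm_pow, norm_mul, Real.norm_of_nonneg hβ0.le, Real.norm_eq_abs]
        exact pow_le_pow_left₀ (by positivity)
          ((mul_le_mul_of_nonneg_left h2 hβ0.le).trans (hg X (hfc (hs hX)))) 2)
    refine (le_abs_self _).trans (h1.trans ?_)
    gcongr
    exact ENNReal.toReal_le_of_le_ofReal (by positivity) hsm
  have hfm := hbound fm (hfmp ▸ Set.subset_union_left) βm hβm (grad c) (fun X hX => hcM hX)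
  have hfp := hbound fp (hfmp ▸ Set.subset_union_right) βp hβp (grad d)
    (fun X hX => mul_le_mul_of_nonneg_left (hdM hX) hβp.le)
  have hE := H h hh Tp hTp hTpc (hPvol.trans (measure_mono hPT)) d
  have hE0 : 0 ≤ ∫ X in Tm, ‖grad c X‖ ^ 2 := integral_nonneg fun X => by positivity
  refine Real.sqrt_le_iff.2 ⟨mul_nonneg (mul_nonneg (mul_nonneg (Real.sqrt_nonneg _)
    (inv_nonneg.2 (Real.sqrt_nonneg _))) (div_nonneg hβp.le (Real.sqrt_nonneg _)))
    (Real.sqrt_nonneg _), ?_⟩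
  have hEm : βp * (ε * R * h ^ 3) ≤ βm * (∫ X in Tm, ‖grad c X‖ ^ 2) +
      βp * ∫ X in Tp, ‖grad d X‖ ^ 2 := by
    have := mul_le_mul_of_nonneg_left hE hβp.le
    have := mul_nonneg hβm.le hE0
    linarith
  set E : ℝ := βm * (∫ X in Tm, ‖grad c X‖ ^ 2) + βp * ∫ X in Tp, ‖grad d X‖ ^ 2
  have hEpos : 0 ≤ E := le_trans (by positivity) hEm
  have h1 : (1 : ℝ) ≤ βp / βm := (one_le_div hβm).2 hβ
  rw [mul_pow, mul_pow, mul_pow, div_pow, inv_pow, Real.sq_sqrt (by positivity),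
    Real.sq_sqrt hh.le, Real.sq_sqrt hβm.le, Real.sq_sqrt hEpos]
  calc _ ≤ (βp * M) ^ 2 * (3 * h ^ 2) + (βp * M) ^ 2 * (3 * h ^ 2) := add_le_add hfm hfp
    _ = 288 / ε * h⁻¹ * βp * 1 * (βp * (ε * R * h ^ 3)) := by
      rw [mul_pow, hM2]
      field_simp
      ring
    _ ≤ 288 / ε * h⁻¹ * βp * (βp / βm) * E := by gcongr
    _ = 288 / ε * h⁻¹ * (βp ^ 2 / βm) * E := by ring
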